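/- Let 𝔥 ⊆ so(n) be a subalgebra, let ℝ^{n₀} := {v ∈ ℝⁿ : Av = 0 for all A ∈ 𝔥} be the subspace on which 𝔥 acts trivially, and let (ℝ^{n₀})^⊥ be its orthogonal complement in ℝⁿ. Let θ₁ : 𝔥 → ℝ be a linear map with θ₁|_{[𝔥,𝔥]} = 0 and θ₂ : ℝ^{n₀} → ℝ a linear map, and set 𝔤 := {(θ₁(A) + θ₂(X), 0, A, X + Y) : A ∈ 𝔥, X ∈ ℝ^{n₀}, Y ∈ (ℝ^{n₀})^⊥} ⊆ co(1,n+1)_{ℝp}. If 𝔤 is a Berger algebra, then θ₂ = 0. -/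

import Mathlib

open Module

noncomputable section

namespace Weyl

variable {V : Type*} [AddCommGroup V] [Module ℝ V]

/-- The endomorphism `X ∧ Y : Z ↦ B(X,Z)•Y − B(Y,Z)•X`. -/
def wedge (B : LinearMap.BilinForm ℝ V) (X Y : V) : Module.End ℝ V where
  toFun Z := B X Z • Y - B Y Z • X
  map_add' z z' := by simp only [map_add, add_smul]; abel
  map_smul' c z := by simp only [map_smul, smul_eq_mul, RingHom.id_apply, mul_smul, smul_sub]

/-- The Lie algebra `so(B)` of endomorphisms skew-symmetric with respect to `B`. -/
def soSet (B : LinearMap.BilinForm ℝ V) : Set (Module.End ℝ V) :=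
  {A | ∀ x y, B (A x) y + B x (A y) = 0}

/-- The conformal Lie algebra `co(B) = ℝ·id ⊕ so(B)`. -/
def coSet (B : LinearMap.BilinForm ℝ V) : Set (Module.End ℝ V) :=
  {F | ∃ c : ℝ, ∃ S ∈ soSet B, F = c • (1 : Module.End ℝ V) + S}

/-- The first prolongation `g^{(1)}` of a set of endomorphisms:
linear maps `φ : V → g` with `φ(X)Y = φ(Y)X`. -/
def firstProlong (g : Set (Module.End ℝ V)) : Set (V →ₗ[ℝ] Module.End ℝ V) :=
  {φ | (∀ x, φ x ∈ g) ∧ ∀ x y, φ x y = φ y x}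

/-- `R` is an algebraic curvature tensor of type `g` (a linear map on `Λ²V`,
encoded as an antisymmetric bilinear map, with values in `g`, satisfying the
Bianchi identity). -/
def IsCurv (g : Set (Module.End ℝ V)) (R : V →ₗ[ℝ] V →ₗ[ℝ] Module.End ℝ V) : Prop :=
  (∀ x y, R x y = - R y x) ∧ (∀ x y, R x y ∈ g) ∧
    ∀ x y z, R x y z + R y z x + R z x y = 0

/-- `L(ℛ(g))`: the span of all values of algebraic curvature tensors of type `g`. -/
def curvSpan (g : Set (Module.End ℝ V)) : Submodule ℝ (Module.End ℝ V) :=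
  Submodule.span ℝ {F | ∃ R, IsCurv g R ∧ ∃ x y, F = R x y}

/-- `g` is a Berger algebra: `L(ℛ(g)) = g`. -/
def IsBerger (g : Set (Module.End ℝ V)) : Prop :=
  (curvSpan g : Set (Module.End ℝ V)) = g

/-- `g` is (the underlying set of) a Lie subalgebra of `gl(V)`. -/
def IsLieSub (g : Set (Module.End ℝ V)) : Prop :=
  (0 : Module.End ℝ V) ∈ g ∧ (∀ F ∈ g, ∀ F' ∈ g, F + F' ∈ g) ∧
    (∀ (c : ℝ), ∀ F ∈ g, c • F ∈ g) ∧ ∀ F ∈ g, ∀ F' ∈ g, F * F' - F' * F ∈ g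

/-- The subspace `W` is invariant under every element of `g`. -/
def Invariant (g : Set (Module.End ℝ V)) (W : Submodule ℝ V) : Prop :=
  ∀ F ∈ g, ∀ x ∈ W, F x ∈ W

/-- The restriction of `B` to `W` is nondegenerate. -/
def IsNondegOn (B : LinearMap.BilinForm ℝ V) (W : Submodule ℝ V) : Prop :=
  ∀ x ∈ W, (∀ y ∈ W, B x y = 0) → x = 0

/-- Weak irreducibility: no proper nonzero invariant nondegenerate subspace. -/
def WeaklyIrred (B : LinearMap.BilinForm ℝ V) (g : Set (Module.End ℝ V)) : Prop :=
  ∀ W : Submodule ℝ V, Invariant g W → IsNondegOn B W → W = ⊥ ∨ W = ⊤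

/-- Irreducibility: no proper nonzero invariant subspace. -/
def Irred (g : Set (Module.End ℝ V)) : Prop :=
  ∀ W : Submodule ℝ V, Invariant g W → W = ⊥ ∨ W = ⊤

/-- The Euclidean dot product on `Fin n → ℝ`. -/
def dotE (n : ℕ) : LinearMap.BilinForm ℝ (Fin n → ℝ) :=
  LinearMap.mk₂ ℝ (fun x y => ∑ i, x i * y i)
    (fun x x' y => by simp [add_mul, Finset.sum_add_distrib])
    (fun c x y => by simp [Finset.mul_sum, mul_assoc])
    (fun x y y' => by simp [mul_add, Finset.sum_add_distrib])
    (fun c x y => by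
      simp only [Pi.smul_apply, smul_eq_mul, Finset.mul_sum]
      exact Finset.sum_congr rfl fun i _ => by ring)

/-- Minkowski space `ℝ^{1,n+1}` in Witt coordinates: the vector `(v, x, u)`
represents `v·p + x + u·q` with respect to a Witt basis `p, e₁, …, eₙ, q`. -/
abbrev Mink (n : ℕ) := ℝ × (Fin n → ℝ) × ℝ

/-- The Minkowski metric in Witt coordinates: `p, q` are isotropic, `(p,q) = 1`,
and the form is the Euclidean one on the `ℝⁿ`-part orthogonal to `p` and `q`. -/
def minkB (n : ℕ) : LinearMap.BilinForm ℝ (Mink n) :=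
  LinearMap.mk₂ ℝ (fun X Y => X.1 * Y.2.2 + X.2.2 * Y.1 + dotE n X.2.1 Y.2.1)
    (fun X X' Y => by
      simp only [Prod.fst_add, Prod.snd_add, Pi.add_apply, map_add,
        LinearMap.add_apply]
      ring)
    (fun c X Y => by
      simp only [Prod.smul_fst, Prod.smul_snd, smul_eq_mul, map_smul,
        LinearMap.smul_apply]
      ring)
    (fun X Y Y' => by
      simp only [Prod.fst_add, Prod.snd_add, Pi.add_apply, map_add,
        LinearMap.add_apply]
      ring)
    (fun c X Y => by
      simp only [Prod.smul_fst, Prod.smul_snd, smul_eq_mul, map_smul,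
        LinearMap.smul_apply]
      ring)

/-- The Witt basis vector `p`. -/
def pvec (n : ℕ) : Mink n := (1, 0, 0)

/-- The Witt basis vector `q`. -/
def qvec (n : ℕ) : Mink n := (0, 0, 1)

/-- The embedding of `ℝⁿ` into Minkowski space. -/
def emb {n : ℕ} (x : Fin n → ℝ) : Mink n := (0, x, 0)

/-- The element `(b, a, A, X) = b·id + (a, A, X)` of `co(1,n+1)_{ℝp}`:
it maps `p ↦ (a+b)·p`, `U ↦ (X,U)·p + A U + b·U` for `U ∈ ℝⁿ`, and
`q ↦ −X + (b−a)·q`. -/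
def coElem {n : ℕ} (b a : ℝ) (A : Module.End ℝ (Fin n → ℝ)) (X : Fin n → ℝ) :
    Module.End ℝ (Mink n) where
  toFun w := ((b + a) * w.1 + dotE n X w.2.1,
              b • w.2.1 + A w.2.1 - w.2.2 • X,
              (b - a) * w.2.2)
  map_add' w w' := by
    simp only [Prod.fst_add, Prod.snd_add, map_add, Prod.mk_add_mk, add_smul]
    refine Prod.ext (by ring) (Prod.ext ?_ (by ring))
    simp only [smul_add]
    abel
  map_smul' c w := by
    simp only [Prod.smul_fst, Prod.smul_snd, smul_eq_mul, map_smul,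
      RingHom.id_apply, Prod.smul_mk]
    refine Prod.ext (by simp; ring) (Prod.ext ?_ (by simp; ring))
    simp only [smul_smul, smul_sub, LinearMap.map_smul]
    rw [mul_comm]
    module

/-- The Lie algebra `so(n)` of skew-symmetric endomorphisms of Euclidean `ℝⁿ`. -/
def soE (n : ℕ) : Set (Module.End ℝ (Fin n → ℝ)) := soSet (dotE n)

/-- The subalgebra `co(1,n+1)_{ℝp}` of `co(1,n+1)` preserving the isotropic line `ℝp`,
whose elements are written `(b, a, A, X)`. -/
def coRp (n : ℕ) : Set (Module.End ℝ (Mink n)) :=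
  {F | ∃ b a : ℝ, ∃ A ∈ soE n, ∃ X : Fin n → ℝ, F = coElem b a A X}

/-- The orthogonal complement of a subspace of Euclidean `ℝⁿ`. -/
def OC (n : ℕ) (W : Submodule ℝ (Fin n → ℝ)) : Submodule ℝ (Fin n → ℝ) where
  carrier := {y | ∀ x ∈ W, dotE n y x = 0}
  zero_mem' := fun x _ => by simp
  add_mem' := by
    intro a b ha hb x hx
    rw [map_add, LinearMap.add_apply, ha x hx, hb x hx, add_zero]
  smul_mem' := by
    intro c y hy x hx
    rw [map_smul, LinearMap.smul_apply, hy x hx, smul_zero]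

/-- The subspace `ℝ^{n₀} = {v : A v = 0 for all A ∈ 𝔥}` on which `𝔥` acts
trivially. -/
def N0 {n : ℕ} (h : Set (Module.End ℝ (Fin n → ℝ))) : Submodule ℝ (Fin n → ℝ) where
  carrier := {v | ∀ A ∈ h, A v = 0}
  zero_mem' := fun A _ => map_zero A
  add_mem' := by
    intro a b ha hb A hA
    rw [map_add, ha A hA, hb A hA, add_zero]
  smul_mem' := by
    intro c v hv A hA
    rw [map_smul, hv A hA, smul_zero]

/-!
Write `R(x,y) = (β(x,y), 0, A(x,y), X(x,y))` for a curvature tensor of type `𝔤`, and let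
`t ∈ ℝ^{n₀}` represent `θ₂`. The Bianchi identity and the vanishing of the first prolongation of
`so(n)` give, for `u, v ∈ ℝⁿ`,
* `β = 0` on `p^⊥`, `A(p,u) = 0`, `A(p,q) = 0`, `X(p,u) = -β(p,q) u` and `β(u,q) = (X(p,q), u)`;
* since `𝔥` kills `t`, also `A(t,v) = 0` and `(t, X(t,v)) = β(v,q) (t,t) - β(t,q) (t,v)`.

Where `A` vanishes, membership in `𝔤` means `β = (t, X)`. Applied to the pairs `(p,t)`, `(p,q)`
and `(t,v)` in turn, this yields `β(p,q) = 0`, `β(t,q) = 0` and `β(v,q) = 0` as soon as `t ≠ 0`.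
Hence `β = 0`, and a nonzero `θ₂` would leave elements of `𝔤` outside `L(ℛ(𝔤))`.
-/

/-- `B (φ x y) z` is symmetric in `x, y` and skew in `y, z`, so it vanishes. -/
theorem eq_zero_of_mem_firstProlong_soSet {B : LinearMap.BilinForm ℝ V} (hsymm : B.IsSymm)
    (hsep : B.SeparatingLeft) {φ : V →ₗ[ℝ] Module.End ℝ V} (hφ : φ ∈ firstProlong (soSet B)) :
    φ = 0 := by
  obtain ⟨hmem, hcomm⟩ := hφ
  have hskew (x y z : V) : B (φ x y) z = -B (φ x z) y := by
    rw [hsymm.eq (φ x z) y, ← add_eq_zero_iff_eq_neg]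
    exact hmem x y z
  ext x y
  refine hsep _ fun z => ?_
  have hcycle : B (φ x y) z = -B (φ x y) z :=
    calc B (φ x y) z = -B (φ z x) y := by rw [hskew, hcomm x z]
      _ = B (φ y z) x := by rw [hskew, neg_neg, hcomm z y]
      _ = -B (φ x y) z := by rw [hskew, hcomm y x]
  linarith

theorem exists_mem_forall_apply_eq [FiniteDimensional ℝ V] {B : LinearMap.BilinForm ℝ V}
    (hB : ∀ x, B x x = 0 → x = 0) (W : Submodule ℝ V) (θ : V →ₗ[ℝ] ℝ) :
    ∃ t ∈ W, ∀ x ∈ W, B t x = θ x := by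
  have hnd : (B.restrict W).Nondegenerate :=
    ⟨fun x hx => Subtype.ext (hB x (hx x)), fun x hx => Subtype.ext (hB x (hx x))⟩
  exact ⟨((B.restrict W).toDual hnd).symm (θ ∘ₗ W.subtype), Subtype.coe_prop _, fun x hx =>
    LinearMap.BilinForm.apply_toDual_symm_apply (hB := hnd) (θ ∘ₗ W.subtype) ⟨x, hx⟩⟩

theorem IsCurv.mono {g g' : Set (Module.End ℝ V)} {R : V →ₗ[ℝ] V →ₗ[ℝ] Module.End ℝ V}
    (hR : IsCurv g R) (hg : g ⊆ g') : IsCurv g' R :=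
  ⟨hR.1, fun x y => hg (hR.2.1 x y), hR.2.2⟩

theorem curvSpan_le {g : Set (Module.End ℝ V)} {S : Submodule ℝ (Module.End ℝ V)}
    (hS : ∀ R, IsCurv g R → ∀ x y, R x y ∈ S) : curvSpan g ≤ S := by
  refine Submodule.span_le.2 ?_
  rintro _ ⟨R, hR, x, y, rfl⟩
  exact hS R hR x y

section Euclidean

variable {n : ℕ}

theorem dotE_comm (x y : Fin n → ℝ) : dotE n x y = dotE n y x :=
  dotProduct_comm x y

theorem dotE_self_eq_zero {x : Fin n → ℝ} : dotE n x x = 0 ↔ x = 0 :=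
  dotProduct_self_eq_zero (v := x)

theorem eq_zero_of_mem_firstProlong_soE {φ : (Fin n → ℝ) →ₗ[ℝ] Module.End ℝ (Fin n → ℝ)}
    (hφ : φ ∈ firstProlong (soE n)) : φ = 0 :=
  eq_zero_of_mem_firstProlong_soSet ⟨dotE_comm⟩ (fun x hx => dotE_self_eq_zero.1 (hx x)) hφ

theorem dotE_apply_of_apply_eq_zero {A : Module.End ℝ (Fin n → ℝ)} (hA : A ∈ soE n)
    {t : Fin n → ℝ} (ht : A t = 0) (x : Fin n → ℝ) : dotE n t (A x) = 0 := by
  simpa [ht] using hA t x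

end Euclidean

section Components

variable {n : ℕ}

@[simp] theorem pvec_fst : (pvec n).1 = 1 := rfl

@[simp] theorem pvec_snd_fst : (pvec n).2.1 = 0 := rfl

@[simp] theorem pvec_snd_snd : (pvec n).2.2 = 0 := rfl

@[simp] theorem qvec_fst : (qvec n).1 = 0 := rfl

@[simp] theorem qvec_snd_fst : (qvec n).2.1 = 0 := rfl

@[simp] theorem qvec_snd_snd : (qvec n).2.2 = 1 := rfl

@[simp] theorem emb_fst (u : Fin n → ℝ) : (emb u).1 = 0 := rfl

@[simp] theorem emb_snd_fst (u : Fin n → ℝ) : (emb u).2.1 = u := rfl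

@[simp] theorem emb_snd_snd (u : Fin n → ℝ) : (emb u).2.2 = 0 := rfl

theorem eq_smul_pvec_add_emb_add_smul_qvec (x : Mink n) :
    x = x.1 • pvec n + emb x.2.1 + x.2.2 • qvec n := by
  ext <;> simp

/-- The embedding `emb` of `ℝⁿ` into Minkowski space as a linear map. -/
def embLinear (n : ℕ) : (Fin n → ℝ) →ₗ[ℝ] Mink n :=
  LinearMap.inr ℝ ℝ _ ∘ₗ LinearMap.inl ℝ _ ℝ

/-- The component `b` of `(b, 0, A, X)`, read off the image of `q` for every endomorphism
so as to be linear. -/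
def scalePart (n : ℕ) : Module.End ℝ (Mink n) →ₗ[ℝ] ℝ where
  toFun F := (F (qvec n)).2.2
  map_add' _ _ := rfl
  map_smul' _ _ := rfl

/-- The component `X` of `(b, 0, A, X)`, read off the image of `q` for every endomorphism
so as to be linear. -/
def translPart (n : ℕ) : Module.End ℝ (Mink n) →ₗ[ℝ] (Fin n → ℝ) where
  toFun F := -(F (qvec n)).2.1
  map_add' _ _ := neg_add _ _
  map_smul' _ _ := (smul_neg _ _).symm

/-- The component `A` of `(b, 0, A, X)`, read off the image of `ℝⁿ` for every endomorphism
so as to be linear. -/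
def rotPart (n : ℕ) : Module.End ℝ (Mink n) →ₗ[ℝ] Module.End ℝ (Fin n → ℝ) where
  toFun F := (LinearMap.fst ℝ _ ℝ ∘ₗ LinearMap.snd ℝ ℝ _) ∘ₗ F ∘ₗ embLinear n -
    scalePart n F • 1
  map_add' F G := by
    rw [LinearMap.add_comp, LinearMap.comp_add, map_add, add_smul, add_sub_add_comm]
  map_smul' c F := by
    rw [LinearMap.smul_comp, LinearMap.comp_smul, map_smul, smul_assoc, RingHom.id_apply, smul_sub]

@[simp]
theorem scalePart_coElem (b : ℝ) (A : Module.End ℝ (Fin n → ℝ)) (X : Fin n → ℝ) :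
    scalePart n (coElem b 0 A X) = b := by
  simp [scalePart, coElem]

@[simp]
theorem translPart_coElem (b : ℝ) (A : Module.End ℝ (Fin n → ℝ)) (X : Fin n → ℝ) :
    translPart n (coElem b 0 A X) = X := by
  simp [translPart, coElem]

@[simp]
theorem rotPart_coElem (b : ℝ) (A : Module.End ℝ (Fin n → ℝ)) (X : Fin n → ℝ) :
    rotPart n (coElem b 0 A X) = A := by
  refine LinearMap.ext fun u => ?_
  simp only [rotPart, LinearMap.coe_mk, AddHom.coe_mk, scalePart_coElem]
  simp [coElem, embLinear]

/-- The subalgebra `ℝ·id ⊕ (so(n) ⋉ ℝⁿ) = {(b, 0, A, X)}` of `co(1,n+1)_{ℝp}`. -/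
def coEucl (n : ℕ) : Set (Module.End ℝ (Mink n)) :=
  {F | ∃ b : ℝ, ∃ A ∈ soE n, ∃ X : Fin n → ℝ, F = coElem b 0 A X}

theorem rotPart_mem_soE {F : Module.End ℝ (Mink n)} (hF : F ∈ coEucl n) :
    rotPart n F ∈ soE n := by
  obtain ⟨b, A, hA, X, rfl⟩ := hF
  simpa using hA

theorem apply_of_mem_coEucl {F : Module.End ℝ (Mink n)} (hF : F ∈ coEucl n) (w : Mink n) :
    F w = (scalePart n F * w.1 + dotE n (translPart n F) w.2.1,
      scalePart n F • w.2.1 + rotPart n F w.2.1 - w.2.2 • translPart n F,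
      scalePart n F * w.2.2) := by
  obtain ⟨b, A, -, X, rfl⟩ := hF
  simp only [scalePart_coElem, translPart_coElem, rotPart_coElem]
  simp [coElem]

end Components

namespace IsCurv

variable {n : ℕ} {R : Mink n →ₗ[ℝ] Mink n →ₗ[ℝ] Module.End ℝ (Mink n)}

theorem bianchi_p (hR : IsCurv (coEucl n) R) (x y z : Mink n) :
    (scalePart n (R x y) * z.1 + dotE n (translPart n (R x y)) z.2.1) +
      (scalePart n (R y z) * x.1 + dotE n (translPart n (R y z)) x.2.1) +
      (scalePart n (R z x) * y.1 + dotE n (translPart n (R z x)) y.2.1) = 0 := by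
  simpa [apply_of_mem_coEucl (hR.2.1 _ _)] using congrArg Prod.fst (hR.2.2 x y z)

theorem bianchi_euclidean (hR : IsCurv (coEucl n) R) (x y z : Mink n) :
    (scalePart n (R x y) • z.2.1 + rotPart n (R x y) z.2.1 - z.2.2 • translPart n (R x y)) +
      (scalePart n (R y z) • x.2.1 + rotPart n (R y z) x.2.1 - x.2.2 • translPart n (R y z)) +
      (scalePart n (R z x) • y.2.1 + rotPart n (R z x) y.2.1 - y.2.2 • translPart n (R z x)) =
      0 := by
  simpa [apply_of_mem_coEucl (hR.2.1 _ _)] using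
    congrArg (fun w : Mink n => w.2.1) (hR.2.2 x y z)

theorem bianchi_q (hR : IsCurv (coEucl n) R) (x y z : Mink n) :
    scalePart n (R x y) * z.2.2 + scalePart n (R y z) * x.2.2 + scalePart n (R z x) * y.2.2 =
      0 := by
  simpa [apply_of_mem_coEucl (hR.2.1 _ _)] using
    congrArg (fun w : Mink n => w.2.2) (hR.2.2 x y z)

theorem scalePart_eq_zero_of_orthogonal_pvec (hR : IsCurv (coEucl n) R) {x y : Mink n}
    (hx : x.2.2 = 0) (hy : y.2.2 = 0) : scalePart n (R x y) = 0 := by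
  simpa [hx, hy] using hR.bianchi_q x y (qvec n)

theorem scalePart_emb_emb (hR : IsCurv (coEucl n) R) (u v : Fin n → ℝ) :
    scalePart n (R (emb u) (emb v)) = 0 :=
  hR.scalePart_eq_zero_of_orthogonal_pvec rfl rfl

theorem scalePart_pvec_emb (hR : IsCurv (coEucl n) R) (u : Fin n → ℝ) :
    scalePart n (R (pvec n) (emb u)) = 0 :=
  hR.scalePart_eq_zero_of_orthogonal_pvec rfl rfl

theorem rotPart_emb_eq_zero (hR : IsCurv (coEucl n) R) {x : Mink n}
    (hx : ∀ u v, rotPart n (R x (emb u)) v = rotPart n (R x (emb v)) u) (u : Fin n → ℝ) :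
    rotPart n (R x (emb u)) = 0 :=
  LinearMap.congr_fun (eq_zero_of_mem_firstProlong_soE (φ := rotPart n ∘ₗ R x ∘ₗ embLinear n)
    ⟨fun u => rotPart_mem_soE (hR.2.1 x (emb u)), hx⟩) u

theorem rotPart_pvec_emb (hR : IsCurv (coEucl n) R) (u : Fin n → ℝ) :
    rotPart n (R (pvec n) (emb u)) = 0 := by
  refine hR.rotPart_emb_eq_zero (fun u v => ?_) u
  have hbianchi := hR.bianchi_euclidean (pvec n) (emb u) (emb v)
  rw [hR.1 (emb v) (pvec n), map_neg, map_neg, hR.scalePart_pvec_emb,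
    hR.scalePart_pvec_emb, hR.scalePart_emb_emb] at hbianchi
  simpa [add_neg_eq_zero] using hbianchi

theorem dotE_translPart_pvec_emb_comm (hR : IsCurv (coEucl n) R) (u v : Fin n → ℝ) :
    dotE n (translPart n (R (pvec n) (emb u))) v =
      dotE n (translPart n (R (pvec n) (emb v))) u := by
  have hbianchi := hR.bianchi_p (pvec n) (emb u) (emb v)
  rw [hR.1 (emb v) (pvec n), hR.scalePart_emb_emb] at hbianchi
  simpa [add_neg_eq_zero] using hbianchi

theorem translPart_pvec_emb (hR : IsCurv (coEucl n) R) (u : Fin n → ℝ) :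
    translPart n (R (pvec n) (emb u)) =
      -(scalePart n (R (pvec n) (qvec n)) • u) - rotPart n (R (pvec n) (qvec n)) u := by
  have hbianchi := hR.bianchi_euclidean (pvec n) (emb u) (qvec n)
  rw [hR.1 (qvec n) (pvec n)] at hbianchi
  have hsum : -translPart n (R (pvec n) (emb u)) +
      (-(scalePart n (R (pvec n) (qvec n)) • u) + -rotPart n (R (pvec n) (qvec n)) u) = 0 := by
    simpa using hbianchi
  linear_combination -hsum

theorem translPart_emb_emb (hR : IsCurv (coEucl n) R) (u v : Fin n → ℝ) :
    translPart n (R (emb u) (emb v)) =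
      (scalePart n (R (emb v) (qvec n)) • u + rotPart n (R (emb v) (qvec n)) u) -
        (scalePart n (R (emb u) (qvec n)) • v + rotPart n (R (emb u) (qvec n)) v) := by
  have hbianchi := hR.bianchi_euclidean (emb u) (emb v) (qvec n)
  rw [hR.1 (qvec n) (emb u)] at hbianchi
  have hsum : -translPart n (R (emb u) (emb v)) +
      (scalePart n (R (emb v) (qvec n)) • u + rotPart n (R (emb v) (qvec n)) u) +
      (-(scalePart n (R (emb u) (qvec n)) • v) + -rotPart n (R (emb u) (qvec n)) v) = 0 := by
    simpa using hbianchi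
  linear_combination -hsum

theorem scalePart_emb_qvec (hR : IsCurv (coEucl n) R) (u : Fin n → ℝ) :
    scalePart n (R (emb u) (qvec n)) = dotE n (translPart n (R (pvec n) (qvec n))) u := by
  have hbianchi := hR.bianchi_p (pvec n) (emb u) (qvec n)
  rw [hR.1 (qvec n) (pvec n)] at hbianchi
  simpa [add_neg_eq_zero] using hbianchi

/-- `A(p,q)` is skew, but `u ↦ X(p,u) = -β(p,q) u - A(p,q) u` is self-adjoint. -/
theorem rotPart_pvec_qvec (hR : IsCurv (coEucl n) R) :
    rotPart n (R (pvec n) (qvec n)) = 0 := by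
  refine LinearMap.ext fun u => ?_
  set A := rotPart n (R (pvec n) (qvec n)) with hA
  have hskew : dotE n (A u) (A u) + dotE n u (A (A u)) = 0 :=
    rotPart_mem_soE (hR.2.1 _ _) u (A u)
  have hsymm := hR.dotE_translPart_pvec_emb_comm u (A u)
  simp only [hR.translPart_pvec_emb, ← hA, map_sub, map_neg, map_smul, LinearMap.sub_apply,
    LinearMap.neg_apply, LinearMap.smul_apply, smul_eq_mul, dotE_comm (A u) u,
    dotE_comm (A (A u)) u] at hsymm
  exact dotE_self_eq_zero.1 (by linarith)

theorem scalePart_eq_zero_of_qvec (hR : IsCurv (coEucl n) R)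
    (hq : ∀ x, scalePart n (R x (qvec n)) = 0) (x y : Mink n) : scalePart n (R x y) = 0 := by
  have hbianchi := hR.bianchi_q x y (qvec n)
  rw [hR.1 (qvec n) x, map_neg, hq, hq] at hbianchi
  simpa using hbianchi

theorem scalePart_qvec_eq_zero (hR : IsCurv (coEucl n) R)
    (hp : scalePart n (R (pvec n) (qvec n)) = 0)
    (hu : ∀ u, scalePart n (R (emb u) (qvec n)) = 0) (x : Mink n) :
    scalePart n (R x (qvec n)) = 0 := by
  have hq : scalePart n (R (qvec n) (qvec n)) = 0 :=
    self_eq_neg.1 ((congrArg _ (hR.1 _ _)).trans (map_neg _ _))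
  rw [eq_smul_pvec_add_emb_add_smul_qvec x]
  simp [hp, hu, hq]

section Annihilated

variable {t : Fin n → ℝ}

theorem rotPart_emb_emb_of_apply_eq_zero (hR : IsCurv (coEucl n) R)
    (ht : ∀ x y, rotPart n (R x y) t = 0) (u : Fin n → ℝ) :
    rotPart n (R (emb t) (emb u)) = 0 := by
  refine hR.rotPart_emb_eq_zero (fun u v => ?_) u
  have hbianchi := hR.bianchi_euclidean (emb t) (emb u) (emb v)
  rw [hR.1 (emb v) (emb t), map_neg, map_neg] at hbianchi
  simpa [hR.scalePart_emb_emb, ht, add_neg_eq_zero] using hbianchi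

theorem dotE_translPart_emb_emb_of_apply_eq_zero (hR : IsCurv (coEucl n) R)
    (ht : ∀ x y, rotPart n (R x y) t = 0) (u : Fin n → ℝ) :
    dotE n t (translPart n (R (emb t) (emb u))) =
      scalePart n (R (emb u) (qvec n)) * dotE n t t -
        scalePart n (R (emb t) (qvec n)) * dotE n t u := by
  have hrot : dotE n t (rotPart n (R (emb t) (qvec n)) u) = 0 :=
    dotE_apply_of_apply_eq_zero (rotPart_mem_soE (hR.2.1 _ _)) (ht _ _) u
  simp [hR.translPart_emb_emb, ht, hrot]

theorem scalePart_eq_zero (hR : IsCurv (coEucl n) R) (ht₀ : t ≠ 0)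
    (ht : ∀ x y, rotPart n (R x y) t = 0)
    (hscale : ∀ x y, rotPart n (R x y) = 0 →
      scalePart n (R x y) = dotE n t (translPart n (R x y))) (x y : Mink n) :
    scalePart n (R x y) = 0 := by
  have htt : dotE n t t ≠ 0 := mt dotE_self_eq_zero.1 ht₀
  have hpq : scalePart n (R (pvec n) (qvec n)) = 0 := by
    have hpt := hscale _ _ (hR.rotPart_pvec_emb t)
    simpa [hR.scalePart_pvec_emb, hR.translPart_pvec_emb, hR.rotPart_pvec_qvec, htt] using hpt
  have htq : scalePart n (R (emb t) (qvec n)) = 0 := by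
    rw [hR.scalePart_emb_qvec, dotE_comm, ← hscale _ _ hR.rotPart_pvec_qvec, hpq]
  have huq (u : Fin n → ℝ) : scalePart n (R (emb u) (qvec n)) = 0 := by
    have htu := hscale _ _ (hR.rotPart_emb_emb_of_apply_eq_zero ht u)
    simpa [hR.scalePart_emb_emb, hR.dotE_translPart_emb_emb_of_apply_eq_zero ht, htq, htt]
      using htu
  exact hR.scalePart_eq_zero_of_qvec (hR.scalePart_qvec_eq_zero hpq huq) x y

end Annihilated

end IsCurv

section Theta

variable {n : ℕ} {h : Set (Module.End ℝ (Fin n → ℝ))} {θ₁ : Module.End ℝ (Fin n → ℝ) →ₗ[ℝ] ℝ}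
  {θ₂ : (Fin n → ℝ) →ₗ[ℝ] ℝ} {F : Module.End ℝ (Mink n)} {t : Fin n → ℝ}

/-- The set `𝔤` of the elements `(θ₁(A) + θ₂(X), 0, A, X + Y)` with `A ∈ 𝔥`, `X ∈ ℝ^{n₀}` and
`Y ∈ (ℝ^{n₀})^⊥`. -/
def coTheta (h : Set (Module.End ℝ (Fin n → ℝ))) (θ₁ : Module.End ℝ (Fin n → ℝ) →ₗ[ℝ] ℝ)
    (θ₂ : (Fin n → ℝ) →ₗ[ℝ] ℝ) : Set (Module.End ℝ (Mink n)) :=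
  {F | ∃ A ∈ h, ∃ X ∈ N0 h, ∃ Y ∈ OC n (N0 h), F = coElem (θ₁ A + θ₂ X) 0 A (X + Y)}

theorem coTheta_subset_coEucl (hso : h ⊆ soE n) : coTheta h θ₁ θ₂ ⊆ coEucl n := by
  rintro _ ⟨A, hA, X, -, Y, -, rfl⟩
  exact ⟨_, A, hso hA, _, rfl⟩

theorem rotPart_mem_of_mem_coTheta (hF : F ∈ coTheta h θ₁ θ₂) : rotPart n F ∈ h := by
  obtain ⟨A, hA, X, -, Y, -, rfl⟩ := hF
  simpa using hA

theorem scalePart_of_mem_coTheta (ht : t ∈ N0 h) (hθ : ∀ X ∈ N0 h, dotE n t X = θ₂ X)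
    (hF : F ∈ coTheta h θ₁ θ₂) :
    scalePart n F = θ₁ (rotPart n F) + dotE n t (translPart n F) := by
  obtain ⟨A, -, X, hX, Y, hY, rfl⟩ := hF
  have hYt : dotE n t Y = 0 := (dotE_comm t Y).trans (hY t ht)
  simp [hθ X hX, hYt]

theorem scalePart_eq_zero_of_mem_curvSpan_coTheta (hso : h ⊆ soE n) (ht₀ : t ≠ 0) (ht : t ∈ N0 h)
    (hθ : ∀ X ∈ N0 h, dotE n t X = θ₂ X) (hF : F ∈ curvSpan (coTheta h θ₁ θ₂)) :
    scalePart n F = 0 := by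
  suffices curvSpan (coTheta h θ₁ θ₂) ≤ LinearMap.ker (scalePart n) from this hF
  refine curvSpan_le fun R hR => ?_
  refine (hR.mono (coTheta_subset_coEucl hso)).scalePart_eq_zero ht₀
    (fun x y => ht _ (rotPart_mem_of_mem_coTheta (hR.2.1 x y))) fun x y hrot => ?_
  simpa [hrot] using scalePart_of_mem_coTheta ht hθ (hR.2.1 x y)

theorem Berger_implies_theta2_zero_general (hso : h ⊆ soE n) (hB : IsBerger (coTheta h θ₁ θ₂)) :
    ∀ X ∈ N0 h, θ₂ X = 0 := by
  obtain ⟨t, ht, hθ⟩ :=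
    exists_mem_forall_apply_eq (fun _ => dotE_self_eq_zero.1) (N0 h) θ₂
  obtain rfl | ht₀ := eq_or_ne t 0
  · intro X hX
    simp [← hθ X hX]
  have hscale {F : Module.End ℝ (Mink n)} (hF : F ∈ coTheta h θ₁ θ₂) : scalePart n F = 0 :=
    scalePart_eq_zero_of_mem_curvSpan_coTheta hso ht₀ ht hθ (hB.ge hF)
  obtain ⟨A, hA, -⟩ : (0 : Module.End ℝ (Mink n)) ∈ coTheta h θ₁ θ₂ := hB.le (zero_mem _)
  have hweight {X : Fin n → ℝ} (hX : X ∈ N0 h) : θ₁ A + θ₂ X = 0 := by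
    simpa using hscale ⟨A, hA, X, hX, 0, zero_mem _, rfl⟩
  intro X hX
  have hA₀ : θ₁ A = 0 := by simpa using hweight (zero_mem _)
  simpa [hA₀] using hweight hX

end Theta

/-- If the algebra
`𝔤 = {(θ₁(A) + θ₂(X), 0, A, X + Y) : A ∈ 𝔥, X ∈ ℝ^{n₀}, Y ∈ (ℝ^{n₀})^⊥}`
is a Berger algebra, then `θ₂ = 0`. -/
theorem Berger_implies_theta2_zero (n : ℕ)
    (h : Set (Module.End ℝ (Fin n → ℝ)))
    (hsub : IsLieSub h) (hso : h ⊆ soE n)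
    (θ₁ : Module.End ℝ (Fin n → ℝ) →ₗ[ℝ] ℝ) (θ₂ : (Fin n → ℝ) →ₗ[ℝ] ℝ)
    (hθ₁ : ∀ A ∈ h, ∀ B ∈ h, θ₁ (A * B - B * A) = 0)
    (hB : IsBerger {F | ∃ A ∈ h, ∃ X ∈ N0 h, ∃ Y ∈ OC n (N0 h),
      F = coElem (θ₁ A + θ₂ X) 0 A (X + Y)}) :
    ∀ X ∈ N0 h, θ₂ X = 0 :=
  Berger_implies_theta2_zero_general hso hB

end Weyl
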